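/- Let d ≥ 2 be an integer, q ≠ 0 real, and let Λ₀ = Λ₀(q,d) > 0 be as in the preceding theorem. Let (X,Y,Z,W) be a maximally extended solution of (★) on (−∞, t_max) such that: (i) Y(t) > 0 and W(t) > 0 for all t; (ii) (X,Y,Z,W)(t) → (0,0,1,0) as t → −∞; (iii) the first integral equation holds with a constant 𝓒 > 0, where 𝓛 = g·Y and g(t) = λ·exp(∫_{−∞}^{t} X(τ)dτ) with λ > 0; (iv) lim_{t→−∞} W(t)/Y(t)² = 1; and (v) 𝓒λ² ≥ Λ₀. Then t_max = +∞, (X,Y,Z,W)(t) → (0,0,0,0) as t → +∞, and 𝓛(t) → 1/√𝓒 as t → +∞. -/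

import Mathlib

open Filter Topology MeasureTheory

/-- `A₂ = d(d+2)`. -/
noncomputable def A2 (d : ℕ) : ℝ := (d : ℝ) * ((d : ℝ) + 2)

/-- `A₃ = (1/4)·d·(d+2)²·q²`. -/
noncomputable def A3 (d : ℕ) (q : ℝ) : ℝ := (1/4) * (d : ℝ) * ((d : ℝ) + 2)^2 * q^2

/-- `(X,Y,Z,W)` solves the nonlinear system (★) on the set `s`. -/
def StarSystem (d : ℕ) (q : ℝ) (X Y Z W : ℝ → ℝ) (s : Set ℝ) : Prop :=
  ∀ t ∈ s,
    HasDerivAt X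
      (X t * ((d : ℝ) * X t^2 + Z t^2 - 1) + (A2 d / (d : ℝ)) * Y t^2
        - (2 * A3 d q / (d : ℝ)) * W t^2) t ∧
    HasDerivAt Y (Y t * ((d : ℝ) * X t^2 + Z t^2 - X t)) t ∧
    HasDerivAt Z (Z t * ((d : ℝ) * X t^2 + Z t^2 - 1) + A3 d q * W t^2) t ∧
    HasDerivAt W (W t * ((d : ℝ) * X t^2 + Z t^2 - 2*X t + Z t)) t

/-- An integral curve of a `C¹` vector field on `(-∞, T)` which stays in a compact set extends
beyond the finite time `T`. -/
theorem exists_extension_of_mem_compact {E : Type*} [NormedAddCommGroup E] [NormedSpace ℝ E]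
    [CompleteSpace E] {F : E → E} (hF : ContDiff ℝ 1 F) {K : Set E} (hK : IsCompact K)
    {u : ℝ → E} {T : ℝ} (hu : ∀ t < T, HasDerivAt u (F (u t)) t) (huK : ∀ t < T, u t ∈ K) :
    ∃ ε > 0, ∃ v : ℝ → E, (∀ t < T + ε, HasDerivAt v (F (v t)) t) ∧ ∀ t < T, v t = u t := by
  obtain ⟨M, hM⟩ := hK.exists_bound_of_continuousOn hF.continuous.continuousOn
  have hlip : LipschitzOnWith M.toNNReal u (Set.Iio T) := by
    refine (convex_Iio T).lipschitzOnWith_of_nnnorm_hasDerivWithin_le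
      (fun t ht => (hu t ht).hasDerivWithinAt) (fun t ht => ?_)
    rw [← NNReal.coe_le_coe]
    exact (hM _ (huK t ht)).trans (Real.le_coe_toNNReal M)
  have hcauchy : Cauchy (map u (𝓝[<] T)) :=
    ((cauchy_nhds (a := T)).mono (g := 𝓝[<] T) inf_le_left).map_of_le
      hlip.uniformContinuousOn inf_le_right
  obtain ⟨x, hx⟩ := CompleteSpace.complete hcauchy
  obtain ⟨α, hαT, ε, hε, hα⟩ :=
    hF.contDiffAt.exists_forall_mem_closedBall_exists_eq_forall_mem_Ioo_hasDerivAt₀ (x₀ := x) T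
  set v : ℝ → E := fun t => if t < T then u t else α t with hv
  have hvu : ∀ t < T, v t = u t := fun t ht => by simp [hv, ht]
  have hvα : ∀ t, T ≤ t → v t = α t := fun t ht => by simp [hv, not_lt.mpr ht]
  have hleft : ∀ t < T, HasDerivAt v (F (v t)) t := by
    intro t ht
    rw [hvu t ht]
    exact (hu t ht).congr_of_eventuallyEq ((eventually_lt_nhds ht).mono hvu)
  have hvx : v T = x := by rw [hvα T le_rfl, hαT]
  have hlim : Tendsto v (𝓝[<] T) (𝓝 x) :=
    Tendsto.congr' (eventually_nhdsWithin_of_forall fun t ht => (hvu t ht).symm) hx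
  refine ⟨ε, hε, v, fun t ht => ?_, hvu⟩
  rcases lt_trichotomy t T with h | rfl | h
  · exact hleft t h
  · have h1 : HasDerivWithinAt v (F (v t)) (Set.Iic t) t := by
      refine hasDerivWithinAt_Iic_of_tendsto_deriv (s := Set.Iio t)
        (fun s hs => (hleft s hs).differentiableAt.differentiableWithinAt) ?_
        self_mem_nhdsWithin ?_
      · rw [ContinuousWithinAt, hvx]
        exact hlim
      · rw [hvx]
        refine Tendsto.congr' (eventually_nhdsWithin_of_forall fun s hs => (hleft s hs).deriv.symm)
          ((hF.continuous.tendsto x).comp hlim)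
    have h2 : HasDerivWithinAt v (F (v t)) (Set.Ici t) t := by
      rw [hvα t le_rfl]
      exact (hα t ⟨by linarith, by linarith⟩).hasDerivWithinAt.congr (fun s hs => hvα s hs)
        (hvα t le_rfl)
    have h3 := h1.union h2
    rwa [Set.Iic_union_Ici, hasDerivWithinAt_univ] at h3
  · rw [hvα t h.le]
    exact (hα t ⟨by linarith, ht⟩).congr_of_eventuallyEq
      ((eventually_gt_nhds h).mono fun s hs => hvα s hs.le)

/-- Barbalat lemma: if `P` converges at `+∞` and its derivative is Lipschitz, then the
derivative tends to `0`. -/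
theorem tendsto_deriv_zero_of_lipschitz {P f : ℝ → ℝ} {l : ℝ} {M : NNReal}
    (hP : ∀ t, HasDerivAt P (f t) t) (hl : Tendsto P atTop (𝓝 l)) (hf : LipschitzWith M f) :
    Tendsto f atTop (𝓝 0) := by
  rw [Metric.tendsto_atTop]
  intro ε hε
  set δ : ℝ := ε / (2 * (M + 1)) with hδ
  have hM : (0 : ℝ) ≤ M := M.2
  have hδ0 : 0 < δ := by positivity
  have hMδ : M * δ < ε / 2 := by
    have : (M + 1) * δ = ε / 2 := by rw [hδ]; field_simp
    nlinarith
  have hdiff : Tendsto (fun t => P (t + δ) - P t) atTop (𝓝 0) := by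
    simpa using (hl.comp (tendsto_atTop_add_const_right atTop δ tendsto_id)).sub hl
  obtain ⟨N, hN⟩ := Metric.tendsto_atTop.mp hdiff (δ * (ε / 2)) (by positivity)
  refine ⟨N, fun t ht => ?_⟩
  obtain ⟨c, ⟨hc1, hc2⟩, hc⟩ := exists_hasDerivAt_eq_slope P f (by linarith : t < t + δ)
    (fun s _ => (hP s).continuousAt.continuousWithinAt) (fun s _ => hP s)
  have h1 : |f c| < ε / 2 := by
    have h := hN t ht
    rw [Real.dist_eq, sub_zero] at h
    rw [hc, abs_div, add_sub_cancel_left, abs_of_pos hδ0, div_lt_iff₀ hδ0]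
    linarith
  have h2 : |f t - f c| ≤ M * δ := by
    have h := hf.dist_le_mul t c
    rw [Real.dist_eq, Real.dist_eq] at h
    refine h.trans (mul_le_mul_of_nonneg_left ?_ hM)
    rw [abs_le]
    constructor <;> linarith
  rw [Real.dist_eq, sub_zero]
  calc |f t| = |(f t - f c) + f c| := by ring_nf
    _ ≤ |f t - f c| + |f c| := abs_add_le _ _
    _ < ε := by linarith

/-- A convergent function cannot have its derivative bounded below by a function with a positive
limit. -/
theorem limit_nonpos_of_le_deriv {f f' g : ℝ → ℝ} {l c : ℝ} (hf : ∀ t, HasDerivAt f (f' t) t)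
    (hl : Tendsto f atTop (𝓝 l)) (hgf : ∀ t, g t ≤ f' t) (hg : Tendsto g atTop (𝓝 c)) :
    c ≤ 0 := by
  by_contra! hc
  obtain ⟨N, hN⟩ := eventually_atTop.mp (hg.eventually_const_lt (half_lt_self hc))
  have hdiff : Tendsto (fun t => f (t + 1) - f t) atTop (𝓝 0) := by
    simpa using (hl.comp (tendsto_atTop_add_const_right atTop 1 tendsto_id)).sub hl
  have : c / 2 ≤ 0 := by
    refine ge_of_tendsto hdiff (eventually_atTop.mpr ⟨N, fun t ht => ?_⟩)
    obtain ⟨s, ⟨hs1, hs2⟩, hs⟩ := exists_hasDerivAt_eq_slope f f' (by linarith : t < t + 1)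
      (fun s _ => (hf s).continuousAt.continuousWithinAt) (fun s _ => hf s)
    rw [add_sub_cancel_left, div_one] at hs
    rw [← hs]
    linarith [hN s (by linarith), hgf s]
  linarith

/-- A function tending to `0` at `-∞` whose derivative is positive wherever the function is
negative is nonnegative. -/
theorem nonneg_of_deriv_pos_of_neg {f f' : ℝ → ℝ} (hf : ∀ t, HasDerivAt f (f' t) t)
    (hl : Tendsto f atBot (𝓝 0)) (hpos : ∀ t, f t < 0 → 0 < f' t) (t : ℝ) : 0 ≤ f t := by
  by_contra! ht
  obtain ⟨N, hN⟩ := eventually_atBot.mp (hl.eventually_const_lt ht)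
  have hcont : Continuous f := continuous_iff_continuousAt.mpr fun s => (hf s).continuousAt
  obtain ⟨s, hs, hmin⟩ := (isCompact_Icc (a := min N t) (b := t)).exists_isMinOn
    ⟨t, min_le_right _ _, le_rfl⟩ hcont.continuousOn
  have hst : f s ≤ f t := hmin ⟨min_le_right _ _, le_rfl⟩
  have hNs : min N t < s := by
    rcases hs.1.lt_or_eq with h | h
    · exact h
    · exact absurd (hN s (h ▸ min_le_left _ _)) (not_lt.mpr hst)
  have hslope := ((hf s).tendsto_slope.mono_left
    (nhdsWithin_mono s fun r (hr : r ∈ Set.Iio s) => (Set.mem_Iio.mp hr).ne)).eventually_const_lt (hpos s (by linarith))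
  obtain ⟨r, hr, hr1, hr2⟩ := (hslope.and (Ioo_mem_nhdsLT hNs)).exists
  have hrs : f s ≤ f r := hmin ⟨hr1.le, hr2.le.trans hs.2⟩
  rw [slope_def_field] at hr
  exact absurd hr (not_lt.mpr (div_nonpos_of_nonneg_of_nonpos (by linarith) (by linarith)))

/-- The fundamental theorem of calculus for `t ↦ ∫ s in (-∞, t], f s`. -/
theorem hasDerivAt_integral_Iic {f : ℝ → ℝ} (hf : Continuous f)
    (hint : ∀ t, IntegrableOn f (Set.Iic t)) (t : ℝ) :
    HasDerivAt (fun t => ∫ s in Set.Iic t, f s) (f t) t := by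
  have h : (fun t => ∫ s in Set.Iic t, f s) =
      fun t => (∫ s in Set.Iic (0 : ℝ), f s) + ∫ s in (0 : ℝ)..t, f s := by
    funext r
    rw [← intervalIntegral.integral_Iic_sub_Iic (hint 0) (hint r)]
    ring
  rw [h]
  exact (hf.integral_hasStrictDerivAt 0 t).hasDerivAt.const_add _

/-- The vector field of the system (★). -/
noncomputable def starField (d : ℕ) (q : ℝ) (p : ℝ × ℝ × ℝ × ℝ) : ℝ × ℝ × ℝ × ℝ :=
  (p.1 * ((d : ℝ) * p.1^2 + p.2.2.1^2 - 1) + (A2 d / (d : ℝ)) * p.2.1^2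
      - (2 * A3 d q / (d : ℝ)) * p.2.2.2^2,
    p.2.1 * ((d : ℝ) * p.1^2 + p.2.2.1^2 - p.1),
    p.2.2.1 * ((d : ℝ) * p.1^2 + p.2.2.1^2 - 1) + A3 d q * p.2.2.2^2,
    p.2.2.2 * ((d : ℝ) * p.1^2 + p.2.2.1^2 - 2 * p.1 + p.2.2.1))

theorem contDiff_starField (d : ℕ) (q : ℝ) : ContDiff ℝ 1 (starField d q) := by
  unfold starField
  fun_prop

/-- A solution of (★) on `(-∞, T)` with values in a compact set extends beyond `T`. -/
theorem StarSystem.exists_extension {d : ℕ} {q : ℝ} {X Y Z W : ℝ → ℝ} {T : ℝ}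
    (h : StarSystem d q X Y Z W (Set.Iio T)) {K : Set (ℝ × ℝ × ℝ × ℝ)} (hK : IsCompact K)
    (hmem : ∀ t < T, (X t, Y t, Z t, W t) ∈ K) :
    ∃ ε > 0, ∃ X' Y' Z' W' : ℝ → ℝ, StarSystem d q X' Y' Z' W' (Set.Iio (T + ε)) ∧
      ∀ t < T, X' t = X t ∧ Y' t = Y t ∧ Z' t = Z t ∧ W' t = W t := by
  obtain ⟨ε, hε, v, hv, hvu⟩ := exists_extension_of_mem_compact (contDiff_starField d q) hK
    (u := fun t => (X t, Y t, Z t, W t)) (T := T)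
    (fun t ht => by
      obtain ⟨h1, h2, h3, h4⟩ := h t ht
      exact h1.prodMk (h2.prodMk (h3.prodMk h4))) hmem
  refine ⟨ε, hε, fun t => (v t).1, fun t => (v t).2.1, fun t => (v t).2.2.1,
    fun t => (v t).2.2.2, fun t ht => ?_, fun t ht => by simp [hvu t ht]⟩
  have h0 := hv t ht
  have hsnd := hasFDerivAt_snd.comp_hasDerivAt t h0
  have hsnd2 := hasFDerivAt_snd.comp_hasDerivAt t hsnd
  have hX : HasDerivAt (fun t => (v t).1) _ t := hasFDerivAt_fst.comp_hasDerivAt t h0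
  have hY : HasDerivAt (fun t => (v t).2.1) _ t := hasFDerivAt_fst.comp_hasDerivAt t hsnd
  have hZ : HasDerivAt (fun t => (v t).2.2.1) _ t := hasFDerivAt_fst.comp_hasDerivAt t hsnd2
  have hW : HasDerivAt (fun t => (v t).2.2.2) _ t := hasFDerivAt_snd.comp_hasDerivAt t hsnd2
  exact ⟨hX, hY, hZ, hW⟩

/-- If the square of `f` is bounded by a function tending to `0`, then `f` tends to `0`. -/
theorem tendsto_zero_of_sq_le {ι : Type*} {l : Filter ι} {f g : ι → ℝ}
    (h : ∀ t, f t ^ 2 ≤ g t) (hg : Tendsto g l (𝓝 0)) : Tendsto f l (𝓝 0) := by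
  have hsqrt : Tendsto (fun t => Real.sqrt (g t)) l (𝓝 0) := by
    simpa using hg.sqrt
  exact squeeze_zero_norm (fun t => Real.abs_le_sqrt (h t)) hsqrt

/-- Let `Λ₀ > 0` be as in the preceding theorem (i.e. any solution of (★) satisfying
(i)–(v) obeys `W²/Y² ≤ A₂/(A₃(d+2))`).  If `(X,Y,Z,W)` is a maximally extended solution
of (★) on `(−∞, t_max)` satisfying (i)–(v), then `t_max = +∞`, `(X,Y,Z,W) → (0,0,0,0)`
as `t → +∞`, and `𝓛 → 1/√𝓒` as `t → +∞`. -/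
theorem stmt17 (d : ℕ) (hd : 2 ≤ d) (q : ℝ) (hq : q ≠ 0)
    (Λ0 : ℝ) (hΛ0 : 0 < Λ0)
    -- `Λ₀` is as in the preceding theorem:
    (hΛprop : ∀ (tmax' : ℝ) (X Y Z W : ℝ → ℝ),
      StarSystem d q X Y Z W (Set.Iio tmax') →
      (∀ t < tmax', 0 < Y t) → (∀ t < tmax', 0 < W t) →
      Tendsto X atBot (𝓝 0) → Tendsto Y atBot (𝓝 0) →
      Tendsto Z atBot (𝓝 1) → Tendsto W atBot (𝓝 0) →
      ∀ (lam C : ℝ), 0 < lam → 0 < C →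
      (∀ t < tmax', IntegrableOn X (Set.Iic t)) →
      (∀ t < tmax',
        (d : ℝ) * X t^2 + A2 d * Y t^2 + Z t^2 - A3 d q * W t^2
          = 1 - C * (lam * Real.exp (∫ τ in Set.Iic t, X τ) * Y t)^2) →
      Tendsto (fun t => W t / Y t^2) atBot (𝓝 1) →
      Λ0 ≤ C * lam^2 →
      ∀ t < tmax', W t^2 / Y t^2 ≤ A2 d / (A3 d q * ((d : ℝ) + 2)))
    -- the solution, on `(−∞, t_max)` with `t_max ∈ (−∞, +∞]`:
    (tmax : EReal) (X Y Z W : ℝ → ℝ)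
    (hode : StarSystem d q X Y Z W {t : ℝ | (t : EReal) < tmax})
    (hY : ∀ t : ℝ, (t : EReal) < tmax → 0 < Y t)
    (hW : ∀ t : ℝ, (t : EReal) < tmax → 0 < W t)
    (hlimX : Tendsto X atBot (𝓝 0)) (hlimY : Tendsto Y atBot (𝓝 0))
    (hlimZ : Tendsto Z atBot (𝓝 1)) (hlimW : Tendsto W atBot (𝓝 0))
    (lam C : ℝ) (hlam : 0 < lam) (hC : 0 < C)
    (hint : ∀ t : ℝ, (t : EReal) < tmax → IntegrableOn X (Set.Iic t))
    (hfirst : ∀ t : ℝ, (t : EReal) < tmax →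
      (d : ℝ) * X t^2 + A2 d * Y t^2 + Z t^2 - A3 d q * W t^2
        = 1 - C * (lam * Real.exp (∫ τ in Set.Iic t, X τ) * Y t)^2)
    (hWY2 : Tendsto (fun t => W t / Y t^2) atBot (𝓝 1))
    (hbig : Λ0 ≤ C * lam^2)
    -- maximality: the solution admits no proper extension
    (hmax : ∀ tmax' : EReal, tmax < tmax' →
      ¬ ∃ X' Y' Z' W' : ℝ → ℝ,
        StarSystem d q X' Y' Z' W' {t : ℝ | (t : EReal) < tmax'} ∧
        ∀ t : ℝ, (t : EReal) < tmax →
          X' t = X t ∧ Y' t = Y t ∧ Z' t = Z t ∧ W' t = W t) :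
    tmax = ⊤ ∧
    Tendsto X atTop (𝓝 0) ∧ Tendsto Y atTop (𝓝 0) ∧
    Tendsto Z atTop (𝓝 0) ∧ Tendsto W atTop (𝓝 0) ∧
    Tendsto (fun t => lam * Real.exp (∫ τ in Set.Iic t, X τ) * Y t) atTop
      (𝓝 (1 / Real.sqrt C)) := by
  have hD : (2 : ℝ) ≤ d := by exact_mod_cast hd
  have hD0 : (0 : ℝ) < d := by linarith
  have hA3 : 0 < A3 d q := by
    have := pow_pos (abs_pos.mpr hq) 2
    rw [sq_abs] at this
    unfold A3
    positivity
  have hratio : ∀ t : ℝ, (t : EReal) < tmax → A3 d q * W t ^ 2 ≤ d * Y t ^ 2 := by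
    intro t ht
    obtain ⟨s, hts, hs⟩ := EReal.lt_iff_exists_real_btwn.mp ht
    have hlt : ∀ r < s, (r : EReal) < tmax := fun r hr => (EReal.coe_lt_coe_iff.mpr hr).trans hs
    have h := hΛprop s X Y Z W (fun r hr => hode r (hlt r hr)) (fun r hr => hY r (hlt r hr))
      (fun r hr => hW r (hlt r hr)) hlimX hlimY hlimZ hlimW lam C hlam hC
      (fun r hr => hint r (hlt r hr)) (fun r hr => hfirst r (hlt r hr)) hWY2 hbig t
      (EReal.coe_lt_coe_iff.mp hts)
    have hYt := hY t ht
    have hquot : A2 d / (A3 d q * ((d : ℝ) + 2)) = d / A3 d q := by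
      unfold A2
      field_simp
    rw [hquot, div_le_div_iff₀ (by positivity) hA3] at h
    linarith
  have henergy : ∀ t : ℝ, (t : EReal) < tmax →
      (d : ℝ) * X t ^ 2 + Z t ^ 2 + d * (d + 1) * Y t ^ 2
        + C * (lam * Real.exp (∫ τ in Set.Iic t, X τ) * Y t) ^ 2 ≤ 1 := by
    intro t ht
    have h1 := hfirst t ht
    have h2 := hratio t ht
    unfold A2 at h1
    linarith
  set R : ℝ := 1 + d / A3 d q with hR
  have hR1 : 1 ≤ R := by
    rw [hR]
    linarith [div_pos hD0 hA3]
  set K : Set (ℝ × ℝ × ℝ × ℝ) := Set.Icc (-R, -R, -R, -R) (R, R, R, R)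
  have hK : IsCompact K := isCompact_Icc
  have hmem : ∀ t : ℝ, (t : EReal) < tmax → (X t, Y t, Z t, W t) ∈ K := by
    intro t ht
    have h1 := henergy t ht
    have h2 := hratio t ht
    have hCL : 0 ≤ C * (lam * Real.exp (∫ τ in Set.Iic t, X τ) * Y t) ^ 2 := by positivity
    have hDY : 0 ≤ (d : ℝ) * (d + 1) * Y t ^ 2 := by positivity
    have hDX : 0 ≤ ((d : ℝ) - 1) * X t ^ 2 := mul_nonneg (by linarith) (sq_nonneg _)
    have hDY' : 0 ≤ ((d : ℝ) * (d + 1) - 1) * Y t ^ 2 := mul_nonneg (by nlinarith) (sq_nonneg _)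
    have hX1 : |X t| ≤ R := (sq_le_one_iff_abs_le_one _).mp
      (by nlinarith [sq_nonneg (Z t)]) |>.trans hR1
    have hZ1 : |Z t| ≤ R := (sq_le_one_iff_abs_le_one _).mp
      (by nlinarith [sq_nonneg (X t)]) |>.trans hR1
    have hYsq : Y t ^ 2 ≤ 1 := by nlinarith [sq_nonneg (X t), sq_nonneg (Z t)]
    have hY1 : |Y t| ≤ R := (sq_le_one_iff_abs_le_one _).mp hYsq |>.trans hR1
    have hWsq : W t ^ 2 ≤ d / A3 d q := by
      rw [le_div_iff₀ hA3]
      nlinarith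
    have hW1 : |W t| ≤ R := abs_le_of_sq_le_sq (by nlinarith) (by linarith)
    rw [abs_le] at hX1 hY1 hZ1 hW1
    exact ⟨⟨hX1.1, hY1.1, hZ1.1, hW1.1⟩, ⟨hX1.2, hY1.2, hZ1.2, hW1.2⟩⟩
  have htop : tmax = ⊤ := by
    induction tmax using EReal.rec with
    | bot =>
      refine absurd ⟨0, 0, 0, 0, fun t _ => ?_, fun t ht => absurd ht not_lt_bot⟩
        (hmax ⊤ bot_lt_top)
      simp
    | top => rfl
    | coe T =>
      obtain ⟨ε, hε, X', Y', Z', W', hsol, heq⟩ := StarSystem.exists_extension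
        (fun t ht => hode t (EReal.coe_lt_coe_iff.mpr ht)) hK
        (fun t ht => hmem t (EReal.coe_lt_coe_iff.mpr ht))
      refine absurd ⟨X', Y', Z', W', fun t ht => hsol t (EReal.coe_lt_coe_iff.mp ht),
        fun t ht => heq t (EReal.coe_lt_coe_iff.mp ht)⟩
        (hmax ((T + ε : ℝ) : EReal) (EReal.coe_lt_coe_iff.mpr (by linarith)))
  subst htop
  simp only [EReal.coe_lt_top, forall_const] at hY hint hfirst hratio henergy hmem
  have hsys : ∀ t, _ := fun t => hode t (EReal.coe_lt_top t)
  have hXd := fun t => (hsys t).1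
  have hYd := fun t => (hsys t).2.1
  have hZd := fun t => (hsys t).2.2.1
  have hXc : Continuous X := continuous_iff_continuousAt.mpr fun t => (hXd t).continuousAt
  set f : ℝ → ℝ := fun t => (d : ℝ) * X t ^ 2 + Z t ^ 2 with hf
  set G : ℝ → ℝ := fun t => ∫ τ in Set.Iic t, X τ with hG
  set L : ℝ → ℝ := fun t => lam * Real.exp (G t) * Y t with hL
  have hGd : ∀ t, HasDerivAt G (X t) t := hasDerivAt_integral_Iic hXc hint
  have hLpos : ∀ t, 0 < L t := fun t => mul_pos (mul_pos hlam (Real.exp_pos _)) (hY t)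
  have hf0 : ∀ t, 0 ≤ f t := fun t => by positivity
  have hf1 : ∀ t, f t ≤ 1 := by
    intro t
    have h1 := henergy t
    have hCL : 0 ≤ C * L t ^ 2 := by positivity
    have hDY : 0 ≤ (d : ℝ) * (d + 1) * Y t ^ 2 := by positivity
    linarith
  have hXlower : ∀ t, X t * (f t - 1) + d * Y t ^ 2 ≤
      X t * ((d : ℝ) * X t^2 + Z t^2 - 1) + (A2 d / (d : ℝ)) * Y t^2
        - (2 * A3 d q / (d : ℝ)) * W t^2 := by
    intro t
    have h1 : A2 d / (d : ℝ) = d + 2 := by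
      unfold A2
      field_simp
    have h2 : 2 * A3 d q / (d : ℝ) * W t ^ 2 ≤ 2 * Y t ^ 2 := by
      rw [div_mul_eq_mul_div, div_le_iff₀ hD0]
      linarith [hratio t]
    rw [h1]
    linarith
  have hXnonneg : ∀ t, 0 ≤ X t := nonneg_of_deriv_pos_of_neg hXd hlimX fun t ht => by
    have h1 : 0 < (d : ℝ) * Y t ^ 2 := mul_pos hD0 (pow_pos (hY t) 2)
    have h2 : 0 ≤ X t * (f t - 1) :=
      mul_nonneg_of_nonpos_of_nonpos ht.le (by linarith [hf1 t])
    linarith [hXlower t]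
  have hLd : ∀ t, HasDerivAt L (L t * f t) t := by
    intro t
    have h := (((hGd t).exp).const_mul lam).mul (hYd t)
    refine h.congr_deriv ?_
    simp only [hL, hf]
    ring
  have hLmono : Monotone L := monotone_of_hasDerivAt_nonneg hLd
    fun t => mul_nonneg (hLpos t).le (hf0 t)
  have hLle : ∀ t, L t ≤ 1 / Real.sqrt C := by
    intro t
    have h1 : C * L t ^ 2 ≤ 1 := by
      have hDY : 0 ≤ (d : ℝ) * (d + 1) * Y t ^ 2 := by positivity
      linarith [henergy t, hf0 t]
    rw [one_div, ← Real.sqrt_inv]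
    refine Real.le_sqrt_of_sq_le ?_
    rw [inv_eq_one_div, le_div_iff₀ hC]
    linarith
  obtain ⟨l, hl⟩ : ∃ l, Tendsto L atTop (𝓝 l) :=
    ⟨_, tendsto_atTop_ciSup hLmono ⟨_, Set.forall_mem_range.mpr hLle⟩⟩
  have hl0 : 0 < l := (hLpos 0).trans_le (hLmono.ge_of_tendsto hl 0)
  have hlog : Tendsto (fun t => Real.log (L t)) atTop (𝓝 (Real.log l)) := hl.log hl0.ne'
  have hlogd : ∀ t, HasDerivAt (fun t => Real.log (L t)) (f t) t := fun t => by
    simpa [(hLpos t).ne'] using (hLd t).log (hLpos t).ne'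
  obtain ⟨M, hM⟩ := hK.exists_bound_of_continuousOn
    (f := fun p : ℝ × ℝ × ℝ × ℝ => 2 * (d : ℝ) * p.1 * (starField d q p).1
      + 2 * p.2.2.1 * (starField d q p).2.2.1)
    (by
      have := (contDiff_starField d q).continuous
      fun_prop)
  have hfd : ∀ t, HasDerivAt f (2 * (d : ℝ) * X t * (starField d q (X t, Y t, Z t, W t)).1
      + 2 * Z t * (starField d q (X t, Y t, Z t, W t)).2.2.1) t := by
    intro t
    refine ((((hXd t).pow 2).const_mul (d : ℝ)).add ((hZd t).pow 2)).congr_deriv ?_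
    simp only [starField]
    ring
  have hflip : LipschitzWith M.toNNReal f := by
    rw [← lipschitzOnWith_univ]
    refine convex_univ.lipschitzOnWith_of_nnnorm_hasDerivWithin_le
      (fun t _ => (hfd t).hasDerivWithinAt) (fun t _ => ?_)
    rw [← NNReal.coe_le_coe]
    exact (hM _ (hmem t)).trans (Real.le_coe_toNNReal M)
  have hflim : Tendsto f atTop (𝓝 0) := tendsto_deriv_zero_of_lipschitz hlogd hlog hflip
  have hXlim : Tendsto X atTop (𝓝 0) := by
    refine tendsto_zero_of_sq_le (fun t => ?_) hflim
    nlinarith [sq_nonneg (X t), sq_nonneg (Z t)]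
  have hZlim : Tendsto Z atTop (𝓝 0) := by
    refine tendsto_zero_of_sq_le (fun t => ?_) hflim
    nlinarith [sq_nonneg (X t), sq_nonneg (Z t)]
  have hYeq : ∀ t, Y t = L t / (lam * Real.exp (G t)) := fun t => by
    have := Real.exp_pos (G t)
    simp only [hL]
    field_simp
  have hYlim : Tendsto Y atTop (𝓝 0) := by
    rw [funext hYeq]
    rcases tendsto_atTop_of_monotone (monotone_of_hasDerivAt_nonneg hGd hXnonneg) with h | ⟨m, hm⟩
    · exact hl.div_atTop ((Real.tendsto_exp_atTop.comp h).const_mul_atTop hlam)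
    · exfalso
      have hden : 0 < lam * Real.exp m := by positivity
      have hlim : Tendsto Y atTop (𝓝 (l / (lam * Real.exp m))) := by
        rw [funext hYeq]
        exact hl.div ((Real.continuous_exp.tendsto m).comp hm |>.const_mul lam) hden.ne'
      have h := limit_nonpos_of_le_deriv hXd hXlim hXlower
        ((hXlim.mul (hflim.sub_const 1)).add ((hlim.pow 2).const_mul (d : ℝ)))
      have : 0 < (d : ℝ) * (l / (lam * Real.exp m)) ^ 2 := by positivity
      linarith
  have hY2 : Tendsto (fun t => (d : ℝ) / A3 d q * Y t ^ 2) atTop (𝓝 0) := by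
    simpa using (hYlim.pow 2).const_mul ((d : ℝ) / A3 d q)
  have hWlim : Tendsto W atTop (𝓝 0) := by
    refine tendsto_zero_of_sq_le (fun t => ?_) hY2
    rw [div_mul_eq_mul_div, le_div_iff₀ hA3]
    linarith [hratio t]
  refine ⟨rfl, hXlim, hYlim, hZlim, hWlim, ?_⟩
  have hleft : Tendsto (fun t => f t + A2 d * Y t ^ 2 - A3 d q * W t ^ 2) atTop (𝓝 0) := by
    simpa using (hflim.add ((hYlim.pow 2).const_mul (A2 d))).sub
      ((hWlim.pow 2).const_mul (A3 d q))
  have hright : Tendsto (fun t => f t + A2 d * Y t ^ 2 - A3 d q * W t ^ 2) atTop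
      (𝓝 (1 - C * l ^ 2)) :=
    (((hl.pow 2).const_mul C).const_sub 1).congr fun t => by linarith [hfirst t]
  have hCl : l ^ 2 = 1 / C := by
    rw [eq_div_iff hC.ne']
    linarith [tendsto_nhds_unique hleft hright]
  have hleq : l = 1 / Real.sqrt C := by
    rw [← Real.sqrt_sq hl0.le, hCl, Real.sqrt_div zero_le_one, Real.sqrt_one]
  exact hleq ▸ hl
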